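/- Let K ≥ 2, a > 0, R > 0, σ² > 0 and η_1, ..., η_K > 0. If (K-1)·a < 1, then the one-shot game has a unique Nash equilibrium in positive powers, given by p_i* = (σ²/η_i)·a/(1 - (K-1)·a) for every i; if (K-1)·a ≥ 1, no Nash equilibrium in positive powers exists. -/

import Mathlib

/-- A positive power profile is a Nash equilibrium of the one-shot
energy-efficiency game if each `p i` maximizes player `i`'s utility
`q ↦ R * exp (-a / SINR_i) / q` over `q > 0`, given the other powers. -/
def IsNashEq (K : ℕ) (a R σ2 : ℝ) (η : Fin K → ℝ) (p : Fin K → ℝ) : Prop :=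
  (∀ i, 0 < p i) ∧
  ∀ i, ∀ q : ℝ, 0 < q →
    R * Real.exp (-(a * ((∑ j ∈ Finset.univ.erase i, p j * η j) + σ2)) / (q * η i)) / q
      ≤ R * Real.exp
          (-(a * ((∑ j ∈ Finset.univ.erase i, p j * η j) + σ2)) / (p i * η i)) / p i

/-!
Writing `x = c / q` turns `exp (-c / q) / q` into `x * exp (-x) / c`, and `x * exp (-x)` has its
unique maximum at `x = 1`. So each player's unique best response is the power at which the SINR
equals `a`, and Nash equilibria are the positive solutions of a linear system in the received powers
`p i * η i`. Player `i`'s equation reads `(1 + a) * (p i * η i) = a * (S + σ2)`, where `S` is the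
total received power; the right-hand side does not depend on `i`, hence all received powers are
equal and the system collapses to the single equation `(1 - (K - 1) * a) * (p i * η i) = a * σ2`.
-/

section Maximization

theorem mul_exp_neg_lt_exp_neg_one {x : ℝ} (hx : x ≠ 1) :
    x * Real.exp (-x) < Real.exp (-1) := by
  calc x * Real.exp (-x) < Real.exp (x - 1) * Real.exp (-x) := by
        gcongr
        linarith [Real.add_one_lt_exp (sub_ne_zero.mpr hx)]
    _ = Real.exp (-1) := by rw [← Real.exp_add]; ring_nf

theorem isMaxOn_exp_neg_div_div_iff {c p : ℝ} (hc : 0 < c) (hp : 0 < p) :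
    IsMaxOn (fun q => Real.exp (-c / q) / q) (Set.Ioi 0) p ↔ p = c := by
  have value_at_max : Real.exp (-c / c) / c = Real.exp (-1) / c := by rw [neg_div, div_self hc.ne']
  have lt_max : ∀ q, 0 < q → q ≠ c → Real.exp (-c / q) / q < Real.exp (-c / c) / c := by
    intro q hq hqc
    have hx : c / q ≠ 1 := fun h => hqc ((div_eq_one_iff_eq hq.ne').mp h).symm
    calc Real.exp (-c / q) / q = c / q * Real.exp (-(c / q)) / c := by field_simp
      _ < Real.exp (-1) / c := by gcongr; exact mul_exp_neg_lt_exp_neg_one hx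
      _ = Real.exp (-c / c) / c := value_at_max.symm
  rw [isMaxOn_iff]
  constructor
  · intro hmax
    by_contra hpc
    exact (lt_max p hp hpc).not_ge (hmax c hc)
  · rintro rfl q hq
    obtain rfl | hqp := eq_or_ne q p
    · exact le_rfl
    · exact (lt_max q hq hqp).le

end Maximization

section LinearSystem

variable {ι A : Type*} [Fintype ι] [DecidableEq ι] [CommRing A] {a b : A} {x : ι → A}

theorem eq_mul_sum_erase_add_iff_of_forall_eq {i : ι} (hx : ∀ j, x j = x i) :
    x i = a * (∑ j ∈ Finset.univ.erase i, x j + b) ↔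
      (1 - ((Fintype.card ι : A) - 1) * a) * x i = a * b := by
  have hsum : ∑ j ∈ Finset.univ.erase i, x j = ((Fintype.card ι : A) - 1) * x i := by
    rw [Finset.sum_erase_eq_sub (Finset.mem_univ i), Finset.sum_congr rfl fun j _ => hx j,
      Finset.sum_const, Finset.card_univ, nsmul_eq_mul, sub_one_mul]
  rw [hsum]
  constructor <;> intro h <;> linear_combination h

variable [NoZeroDivisors A]

theorem eq_of_forall_eq_mul_sum_erase_add (ha : 1 + a ≠ 0)
    (h : ∀ i, x i = a * (∑ j ∈ Finset.univ.erase i, x j + b)) (i j : ι) : x i = x j := by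
  have htotal : ∀ k, (1 + a) * x k = a * (∑ l, x l + b) := fun k => by
    rw [← Finset.add_sum_erase Finset.univ x (Finset.mem_univ k)]
    linear_combination h k
  exact mul_left_cancel₀ ha ((htotal i).trans (htotal j).symm)

theorem forall_eq_mul_sum_erase_add_iff (ha : 1 + a ≠ 0) (hab : a * b ≠ 0) :
    (∀ i, x i = a * (∑ j ∈ Finset.univ.erase i, x j + b)) ↔
      ∀ i, (1 - ((Fintype.card ι : A) - 1) * a) * x i = a * b := by
  constructor
  · intro h i
    exact (eq_mul_sum_erase_add_iff_of_forall_eq fun j =>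
      eq_of_forall_eq_mul_sum_erase_add ha h j i).mp (h i)
  · intro h i
    have hcoeff : 1 - ((Fintype.card ι : A) - 1) * a ≠ 0 :=
      left_ne_zero_of_mul ((h i).trans_ne hab)
    exact (eq_mul_sum_erase_add_iff_of_forall_eq fun j =>
      mul_left_cancel₀ hcoeff ((h j).trans (h i).symm)).mpr (h i)

end LinearSystem

section Equilibrium

/-- Player `i`'s signal-to-interference-plus-noise ratio at the power profile `p`, for channel
gains `η` and noise power `σ2`. -/
noncomputable def sinr {ι : Type*} [Fintype ι] [DecidableEq ι] (σ2 : ℝ) (η p : ι → ℝ) (i : ι) :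
    ℝ :=
  p i * η i / (∑ j ∈ Finset.univ.erase i, p j * η j + σ2)

theorem interference_add_noise_pos {ι : Type*} {s : Finset ι} {σ2 : ℝ} {η p : ι → ℝ}
    (hσ : 0 < σ2) (hη : ∀ i, 0 < η i) (hp : ∀ i, 0 < p i) : 0 < ∑ j ∈ s, p j * η j + σ2 :=
  add_pos_of_nonneg_of_pos (Finset.sum_nonneg fun j _ => (mul_pos (hp j) (hη j)).le) hσ

variable {K : ℕ} {a R σ2 : ℝ} {η p : Fin K → ℝ}

theorem isNashEq_iff_sinr_eq (ha : 0 < a) (hR : 0 < R) (hσ : 0 < σ2) (hη : ∀ i, 0 < η i) :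
    IsNashEq K a R σ2 η p ↔ (∀ i, 0 < p i) ∧ ∀ i, sinr σ2 η p i = a := by
  refine and_congr_right fun hp => forall_congr' fun i => ?_
  rw [sinr]
  set I := ∑ j ∈ Finset.univ.erase i, p j * η j + σ2
  have hI : 0 < I := interference_add_noise_pos hσ hη hp
  have hutility : ∀ q, R * Real.exp (-(a * I) / (q * η i)) / q =
      R * (Real.exp (-(a * I / η i) / q) / q) := fun q => by
    rw [mul_div_assoc, ← neg_div, div_div, mul_comm (η i)]
  simp only [hutility, mul_le_mul_iff_right₀ hR]
  calc _ ↔ p i = a * I / η i :=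
        isMaxOn_exp_neg_div_div_iff (div_pos (mul_pos ha hI) (hη i)) (hp i)
    _ ↔ p i * η i / I = a := by rw [eq_div_iff (hη i).ne', div_eq_iff hI.ne']

theorem isNashEq_iff_mul_received_power_eq (ha : 0 < a) (hR : 0 < R) (hσ : 0 < σ2)
    (hη : ∀ i, 0 < η i) :
    IsNashEq K a R σ2 η p ↔
      (∀ i, 0 < p i) ∧ ∀ i, (1 - ((K : ℝ) - 1) * a) * (p i * η i) = a * σ2 := by
  rw [isNashEq_iff_sinr_eq ha hR hσ hη]
  refine and_congr_right fun hp => ?_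
  simp only [sinr, div_eq_iff (interference_add_noise_pos hσ hη hp).ne']
  simpa only [Fintype.card_fin] using
    forall_eq_mul_sum_erase_add_iff (x := fun i => p i * η i)
      (by positivity : 1 + a ≠ 0) (mul_pos ha hσ).ne'

end Equilibrium

/-- If `(K-1)*a < 1`, the one-shot game has a unique positive Nash equilibrium,
given by `p_i* = (σ²/η_i) * a / (1 - (K-1)*a)`; if `(K-1)*a ≥ 1`, no positive
Nash equilibrium exists. -/
theorem nash_equilibrium_existence_uniqueness (K : ℕ) (hK : 2 ≤ K) (a R σ2 : ℝ)
    (ha : 0 < a) (hR : 0 < R) (hσ : 0 < σ2) (η : Fin K → ℝ) (hη : ∀ i, 0 < η i) :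
    (((K : ℝ) - 1) * a < 1 →
      (IsNashEq K a R σ2 η (fun i => σ2 / η i * (a / (1 - ((K : ℝ) - 1) * a))) ∧
       ∀ p : Fin K → ℝ, IsNashEq K a R σ2 η p →
         p = fun i => σ2 / η i * (a / (1 - ((K : ℝ) - 1) * a)))) ∧
    (1 ≤ ((K : ℝ) - 1) * a → ¬ ∃ p : Fin K → ℝ, IsNashEq K a R σ2 η p) := by
  simp only [isNashEq_iff_mul_received_power_eq ha hR hσ hη]
  refine ⟨fun hlt => ?_, fun hge => ?_⟩
  · have hD : 0 < 1 - ((K : ℝ) - 1) * a := sub_pos.mpr hlt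
    refine ⟨⟨fun i => mul_pos (div_pos hσ (hη i)) (div_pos ha hD), fun i => ?_⟩, ?_⟩
    · have := (hη i).ne'
      have := hD.ne'
      field_simp
    · rintro p ⟨-, heq⟩
      funext i
      rw [div_mul_div_comm, eq_div_iff (mul_pos (hη i) hD).ne']
      linear_combination heq i
  · rintro ⟨p, hp, heq⟩
    let i : Fin K := ⟨0, by lia⟩
    have hnonpos : (1 - ((K : ℝ) - 1) * a) * (p i * η i) ≤ 0 :=
      mul_nonpos_of_nonpos_of_nonneg (sub_nonpos.mpr hge) (mul_pos (hp i) (hη i)).le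
    exact (mul_pos ha hσ).not_ge (heq i ▸ hnonpos)
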